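/- arXiv:2211.12541 — 2 statements merged into one kernel-verified Lean document; each statement's English description precedes it below -/
import Mathlib

section
/- For P ∈ PD(N), let φ(P) denote the supremum of the differential entropy ∫_{PSD(N)} −f(Q) log f(Q) dQ over all densities f that are positive on PD(N), supported on PSD(N), integrate to 1, and satisfy ∫_{PSD(N)} f(Q)·Q dQ = P. Then φ(P) = inf_{Y ∈ PD(N)} [ tr(YP) + log ∫_{PSD(N)} e^{−tr(YQ)} dQ ], and this supremum is attained by the density f*(Q) = e^{−tr(Y*Q)} / ∫_{PSD(N)} e^{−tr(Y*R)} dR, where Y* = ((N+1)/2)·P^{−1} is the unique minimizer of the dual problem; f* has expectation P and differential entropy φ(P). -/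
/-!
# Maximum-entropy duality over the PSD cone

Weak duality is Gibbs' inequality: for an admissible `f` and `Y ∈ PD(N)`, the gap between the dual
objective at `Y` and the entropy of `f` is the relative entropy of `f` with respect to the
normalised weight `e^{−tr(YQ)} / ∫ e^{−tr(YR)} dR` (`weak_duality`). It is nonnegative, and it
vanishes only if `f` is that weight almost everywhere. The weight for `Y* = ((N+1)/2)·P⁻¹` has
entropy equal to the dual objective at `Y*` as soon as its mean is `P`, which closes the gap. If `Y`
is another minimiser, the two normalised weights agree almost everywhere, hence have the same mean,
and the mean determines the parameter (`ystar_unique`).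

The computation behind this is that the mean of the weight for `Y` is `((N+1)/2)·Y⁻¹`
(`expMean_eq`). The congruence `Q ↦ A Q Aᵀ` scales Lebesgue measure by a constant which cancels in
the mean, so the mean for `Y⁻¹ = A Aᵀ` is `A M Aᵀ` with `M` the mean for `Y = 1`; the Jacobian
`det(A)^{N+1}` is never needed. Signed permutation matrices show that `M` is scalar (`expMean_one`),
and the behaviour of Lebesgue measure under dilations gives `tr M = dim Sym(N) = N(N+1)/2`
(`trace_expMean_one`).

The measure theory rests on the isometric inclusion of `Sym(N)`, which identifies the Hausdorff
measure with a Haar measure (`psdLeb_eq_map`). Admissible densities are unconstrained in sign at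
singular PSD matrices, which form a null set as the frontier of a convex cone (`ae_posDef`).
-/

open MeasureTheory Matrix Filter
open scoped ENNReal NNReal

noncomputable section

/-- Entrywise embedding of matrices into Euclidean space (isometric for the
Frobenius inner product on symmetric matrices). -/
def toEuc (N : ℕ) (P : Matrix (Fin N) (Fin N) ℝ) : EuclideanSpace ℝ (Fin N × Fin N) :=
  (EuclideanSpace.equiv (Fin N × Fin N) ℝ).symm fun p => P p.1 p.2

/-- The inverse identification, reading a matrix off a Euclidean point. -/
def fromEuc (N : ℕ) (x : EuclideanSpace ℝ (Fin N × Fin N)) : Matrix (Fin N) (Fin N) ℝ :=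
  Matrix.of fun i j => x (i, j)

/-- The image of the PSD cone inside Euclidean space. -/
def Epsd (N : ℕ) : Set (EuclideanSpace ℝ (Fin N × Fin N)) :=
  toEuc N '' {Q | Q.PosSemidef}

/-- Lebesgue measure on `Sym(N)` induced by the Frobenius inner product,
realized as the `N(N+1)/2`-dimensional Hausdorff measure on Euclidean space. -/
def symLeb (N : ℕ) : Measure (EuclideanSpace ℝ (Fin N × Fin N)) :=
  μH[(N : ℝ) * ((N : ℝ) + 1) / 2]

/-- The dual objective `Y ↦ tr(YP) + log ∫_{PSD(N)} e^{−tr(YQ)} dQ`. -/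
def dualFn (N : ℕ) (P Y : Matrix (Fin N) (Fin N) ℝ) : ℝ :=
  (Y * P).trace +
    Real.log (∫ x in Epsd N, Real.exp (-(Y * fromEuc N x).trace) ∂symLeb N)

/-- Differential entropy `∫_{PSD(N)} −f log f` of a density on `Sym(N)`. -/
def entropyOf (N : ℕ) (f : Matrix (Fin N) (Fin N) ℝ → ℝ) : ℝ :=
  ∫ x in Epsd N, -(f (fromEuc N x) * Real.log (f (fromEuc N x))) ∂symLeb N

/-- `f` is an admissible density for the maximum-entropy problem with
prescribed expectation `P`: positive on `PD(N)`, supported on `PSD(N)`,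
suitably integrable, integrating to `1`, and with expectation `P`. -/
def IsAdmissible (N : ℕ) (P : Matrix (Fin N) (Fin N) ℝ)
    (f : Matrix (Fin N) (Fin N) ℝ → ℝ) : Prop :=
  (∀ Q : Matrix (Fin N) (Fin N) ℝ, Q.PosDef → 0 < f Q) ∧
  (∀ Q : Matrix (Fin N) (Fin N) ℝ, ¬ Q.PosSemidef → f Q = 0) ∧
  IntegrableOn (fun x => f (fromEuc N x)) (Epsd N) (symLeb N) ∧
  IntegrableOn (fun x => f (fromEuc N x) * Real.log (f (fromEuc N x))) (Epsd N) (symLeb N) ∧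
  (∀ i j, IntegrableOn (fun x => f (fromEuc N x) * fromEuc N x i j) (Epsd N) (symLeb N)) ∧
  (∫ x in Epsd N, f (fromEuc N x) ∂symLeb N) = 1 ∧
  (∀ i j, (∫ x in Epsd N, f (fromEuc N x) * fromEuc N x i j ∂symLeb N) = P i j)

/-- The maximum-entropy density
`f*(Q) = e^{−tr(Y*Q)} / ∫_{PSD(N)} e^{−tr(Y*R)} dR` with
`Y* = ((N+1)/2)·P⁻¹`, supported on `PSD(N)`. -/
def fstar (N : ℕ) (P : Matrix (Fin N) (Fin N) ℝ) : Matrix (Fin N) (Fin N) ℝ → ℝ :=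
  Set.indicator {Q | Q.PosSemidef} fun Q =>
    Real.exp (-(((((N : ℝ) + 1) / 2) • P⁻¹) * Q).trace) /
      ∫ x in Epsd N,
        Real.exp (-(((((N : ℝ) + 1) / 2) • P⁻¹) * fromEuc N x).trace) ∂symLeb N

/-! ### The space of symmetric matrices and its Lebesgue measure -/

/-- The ambient Euclidean space of all `N × N` matrices. -/
abbrev MatEuc (N : ℕ) := EuclideanSpace ℝ (Fin N × Fin N)

@[simp] lemma toEuc_apply (N : ℕ) (P : Matrix (Fin N) (Fin N) ℝ) (p : Fin N × Fin N) :
    toEuc N P p = P p.1 p.2 := rfl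

@[simp] lemma fromEuc_apply (N : ℕ) (x : MatEuc N) (i j : Fin N) :
    fromEuc N x i j = x (i, j) := rfl

@[simp] lemma fromEuc_toEuc (N : ℕ) (P : Matrix (Fin N) (Fin N) ℝ) :
    fromEuc N (toEuc N P) = P := rfl

@[simp] lemma toEuc_fromEuc (N : ℕ) (x : MatEuc N) : toEuc N (fromEuc N x) = x := rfl

lemma fromEuc_add (N : ℕ) (x y : MatEuc N) :
    fromEuc N (x + y) = fromEuc N x + fromEuc N y := rfl

lemma fromEuc_sub (N : ℕ) (x y : MatEuc N) :
    fromEuc N (x - y) = fromEuc N x - fromEuc N y := rfl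

lemma fromEuc_smul (N : ℕ) (c : ℝ) (x : MatEuc N) :
    fromEuc N (c • x) = c • fromEuc N x := rfl

lemma continuous_fromEuc (N : ℕ) : Continuous (fromEuc N) :=
  continuous_matrix fun i j => by simp only [fromEuc_apply]; fun_prop

lemma mem_Epsd {N : ℕ} {x : MatEuc N} : x ∈ Epsd N ↔ (fromEuc N x).PosSemidef :=
  ⟨by rintro ⟨Q, hQ, rfl⟩; exact hQ, fun h => ⟨fromEuc N x, h, rfl⟩⟩

lemma isClosed_Epsd (N : ℕ) : IsClosed (Epsd N) := by
  have : Epsd N = {x | (fromEuc N x)ᴴ = fromEuc N x} ∩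
      ⋂ v : Fin N → ℝ, {x | 0 ≤ star v ⬝ᵥ (fromEuc N x *ᵥ v)} := by
    ext x
    simp [mem_Epsd, posSemidef_iff_dotProduct_mulVec, IsHermitian]
  rw [this]
  have hc := continuous_fromEuc N
  refine (isClosed_eq hc.matrix_conjTranspose hc).inter (isClosed_iInter fun v => ?_)
  exact isClosed_le continuous_const
    (continuous_const.dotProduct (hc.matrix_mulVec continuous_const))

/-- The linear map spreading a function on unordered pairs to a symmetric matrix. -/
def symEmb (N : ℕ) : (Sym2 (Fin N) → ℝ) →ₗ[ℝ] MatEuc N where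
  toFun g := toEuc N (Matrix.of fun i j => g s(i, j))
  map_add' _ _ := rfl
  map_smul' _ _ := rfl

/-- `Sym(N)` as a subspace of the ambient Euclidean space. -/
def symSub (N : ℕ) : Submodule ℝ (MatEuc N) := LinearMap.range (symEmb N)

lemma mem_symSub {N : ℕ} {x : MatEuc N} : x ∈ symSub N ↔ (fromEuc N x).IsHermitian := by
  constructor
  · rintro ⟨g, rfl⟩
    ext i j
    exact congrArg g Sym2.eq_swap
  · intro h
    refine ⟨fun z => Sym2.lift ⟨fun i j => x (i, j), fun i j => ?_⟩ z, ?_⟩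
    · simpa using (congrFun (congrFun h i) j).symm
    · ext p
      rfl

lemma finrank_symSub (N : ℕ) :
    (Module.finrank ℝ (symSub N) : ℝ) = (N : ℝ) * ((N : ℝ) + 1) / 2 := by
  have hinj : Function.Injective (symEmb N) := by
    intro g g' h
    funext z
    induction z with
    | _ i j => exact congrArg (fun y : MatEuc N => y (i, j)) h
  rw [symSub, LinearMap.finrank_range_of_inj hinj, Module.finrank_fintype_fun_eq_card, Sym2.card,
    Fintype.card_fin, Nat.cast_choose_two]
  push_cast
  ring

/-- Haar measure on `Sym(N)`, normalised as the Hausdorff measure of top dimension. -/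
def symHaar (N : ℕ) : Measure (symSub N) := μH[(Module.finrank ℝ (symSub N) : ℝ)]

instance (N : ℕ) : (symHaar N).IsAddHaarMeasure := by
  unfold symHaar; infer_instance

/-- The PSD cone inside `Sym(N)`. -/
def psdCone (N : ℕ) : Set (symSub N) := (↑) ⁻¹' Epsd N

lemma mem_psdCone {N : ℕ} {x : symSub N} : x ∈ psdCone N ↔ (fromEuc N x).PosSemidef := mem_Epsd

lemma isClosed_psdCone (N : ℕ) : IsClosed (psdCone N) :=
  (isClosed_Epsd N).preimage continuous_subtype_val

/-- Lebesgue measure on the PSD cone, as a measure on the ambient Euclidean space. -/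
def psdLeb (N : ℕ) : Measure (MatEuc N) := (symLeb N).restrict (Epsd N)

lemma measurableEmbedding_coe (N : ℕ) : MeasurableEmbedding ((↑) : symSub N → MatEuc N) :=
  MeasurableEmbedding.subtype_coe (symSub N).closed_of_finiteDimensional.measurableSet

/-- Since the inclusion of `Sym(N)` is isometric, it transports Haar measure to the Hausdorff
measure; this reduces every statement about `symLeb` to one about a Haar measure. -/
lemma psdLeb_eq_map (N : ℕ) :
    psdLeb N = Measure.map (↑) ((symHaar N).restrict (psdCone N)) := by
  have h1 : Measure.map ((↑) : symSub N → MatEuc N) (symHaar N)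
      = (symLeb N).restrict (symSub N : Set (MatEuc N)) := by
    rw [symHaar, Isometry.map_hausdorffMeasure isometry_subtype_coe (Or.inl (by positivity)),
      finrank_symSub, Subtype.range_coe]
    rfl
  have hsub : Epsd N ⊆ (symSub N : Set (MatEuc N)) := fun x hx =>
    mem_symSub.2 (mem_Epsd.1 hx).isHermitian
  rw [psdCone, ← (measurableEmbedding_coe N).restrict_map, h1,
    Measure.restrict_restrict (isClosed_Epsd N).measurableSet,
    Set.inter_eq_left.2 hsub, psdLeb]

/-- A linear automorphism of `Sym(N)` preserving the PSD cone scales Lebesgue measure on the cone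
by a constant. -/
lemma map_psdLeb {N : ℕ} (f : MatEuc N →ₗ[ℝ] MatEuc N)
    (hf : ∀ x ∈ symSub N, f x ∈ symSub N) (hdet : LinearMap.det (f.restrict hf) ≠ 0)
    (hK : ∀ x ∈ symSub N, f x ∈ Epsd N ↔ x ∈ Epsd N) :
    Measure.map f (psdLeb N)
      = ENNReal.ofReal |(LinearMap.det (f.restrict hf))⁻¹| • psdLeb N := by
  have hfm : Measurable f := f.continuous_of_finiteDimensional.measurable
  have hgm : Measurable (f.restrict hf) :=
    (f.restrict hf).continuous_of_finiteDimensional.measurable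
  have hpre : psdCone N = (f.restrict hf) ⁻¹' psdCone N := by
    ext x
    exact (hK x x.2).symm
  rw [psdLeb_eq_map, Measure.map_map hfm measurable_subtype_coe, ← Measure.map_smul,
    ← Measure.restrict_smul, ← Measure.map_linearMap_addHaar_eq_smul_addHaar _ hdet,
    Measure.restrict_map hgm (isClosed_psdCone N).measurableSet, ← hpre,
    Measure.map_map measurable_subtype_coe hgm]
  rfl

/-- Conjugation `Q ↦ A Q Aᵀ` on the ambient Euclidean space. -/
def conjMap (N : ℕ) (A : Matrix (Fin N) (Fin N) ℝ) : MatEuc N →ₗ[ℝ] MatEuc N where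
  toFun x := toEuc N (A * fromEuc N x * Aᵀ)
  map_add' x y := by rw [fromEuc_add, mul_add, add_mul]; rfl
  map_smul' c x := by rw [fromEuc_smul, Matrix.mul_smul, Matrix.smul_mul]; rfl

@[simp] lemma fromEuc_conjMap (N : ℕ) (A : Matrix (Fin N) (Fin N) ℝ) (x : MatEuc N) :
    fromEuc N (conjMap N A x) = A * fromEuc N x * Aᵀ := rfl

lemma map_conjMap {N : ℕ} {A : Matrix (Fin N) (Fin N) ℝ} (hA : IsUnit A) :
    ∃ c : ℝ≥0∞, c ≠ 0 ∧ c ≠ ⊤ ∧ Measure.map (conjMap N A) (psdLeb N) = c • psdLeb N := by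
  have hf : ∀ x ∈ symSub N, conjMap N A x ∈ symSub N := by
    intro x hx
    rw [mem_symSub] at hx ⊢
    rw [fromEuc_conjMap, ← conjTranspose_eq_transpose_of_trivial]
    exact isHermitian_mul_mul_conjTranspose A hx
  have hK : ∀ x ∈ symSub N, conjMap N A x ∈ Epsd N ↔ x ∈ Epsd N := by
    intro x _
    rw [mem_Epsd, mem_Epsd, fromEuc_conjMap, ← conjTranspose_eq_transpose_of_trivial]
    exact hA.posSemidef_star_right_conjugate_iff
  have hinj : Function.Injective ((conjMap N A).restrict hf) := by
    intro x y hxy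
    have h : A * fromEuc N x * Aᵀ = A * fromEuc N y * Aᵀ :=
      congrArg (fun z : symSub N => fromEuc N z) hxy
    have h' := hA.mul_left_cancel
      (((isUnit_transpose (A := A)).2 hA).mul_right_cancel h)
    exact Subtype.ext (by simpa using congrArg (toEuc N) h')
  have hdet : LinearMap.det ((conjMap N A).restrict hf) ≠ 0 :=
    (LinearEquiv.isUnit_det' (LinearEquiv.ofInjectiveEndo _ hinj)).ne_zero
  exact ⟨_, by simpa using hdet, ENNReal.ofReal_ne_top, map_psdLeb _ hf hdet hK⟩

/-- Integration against dilations of the cone: the factor is `s⁻ᵈ` with `d = N(N+1)/2`. -/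
lemma integral_smul_psdLeb {N : ℕ} {s : ℝ} (hs : 0 < s) (g : MatEuc N → ℝ) :
    ∫ x, g (s • x) ∂psdLeb N
      = (s ^ Module.finrank ℝ (symSub N))⁻¹ * ∫ x, g x ∂psdLeb N := by
  set f : MatEuc N →ₗ[ℝ] MatEuc N := s • LinearMap.id with hfdef
  have hf : ∀ x ∈ symSub N, f x ∈ symSub N := fun x hx => (symSub N).smul_mem s hx
  have hres : f.restrict hf = s • LinearMap.id := rfl
  have hdet : LinearMap.det (f.restrict hf) = s ^ Module.finrank ℝ (symSub N) := by
    rw [hres, LinearMap.det_smul, LinearMap.det_id, mul_one]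
  have hK : ∀ x ∈ symSub N, f x ∈ Epsd N ↔ x ∈ Epsd N := by
    intro x _
    rw [mem_Epsd, mem_Epsd]
    refine ⟨fun h => ?_, fun h => h.smul hs.le⟩
    have := h.smul (inv_pos.2 hs).le
    rwa [show fromEuc N (f x) = s • fromEuc N x from rfl, smul_smul, inv_mul_cancel₀ hs.ne',
      one_smul] at this
  have hmap := map_psdLeb f hf (by rw [hdet]; positivity) hK
  have he : MeasurableEmbedding f :=
    (Homeomorph.smulOfNeZero s hs.ne').measurableEmbedding
  calc ∫ x, g (s • x) ∂psdLeb N = ∫ x, g x ∂Measure.map f (psdLeb N) := (he.integral_map g).symm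
    _ = _ := by
      rw [hmap, integral_smul_measure, hdet, ENNReal.toReal_ofReal (abs_nonneg _),
        abs_of_pos (by positivity), smul_eq_mul]

lemma ae_posSemidef (N : ℕ) : ∀ᵐ x ∂psdLeb N, (fromEuc N x).PosSemidef :=
  (ae_restrict_mem (isClosed_Epsd N).measurableSet).mono fun _ h => mem_Epsd.1 h

/-- The identity matrix as a point of `Sym(N)`. -/
def symOne (N : ℕ) : symSub N := ⟨toEuc N 1, mem_symSub.2 isHermitian_one⟩

/-- Singular PSD matrices lie on the frontier of the convex cone, hence form a null set. -/
lemma ae_posDef (N : ℕ) : ∀ᵐ x ∂psdLeb N, (fromEuc N x).PosDef := by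
  have hconv : Convex ℝ (psdCone N) := by
    intro x hx y hy a b ha hb _
    rw [mem_psdCone] at hx hy ⊢
    exact (hx.smul ha).add (hy.smul hb)
  have hint : ∀ x ∈ interior (psdCone N), (fromEuc N x).PosDef := by
    intro x hx
    have hc : Tendsto (fun t : ℝ => x - t • symOne N) (nhdsWithin 0 (Set.Ioi 0)) (nhds x) := by
      have : Continuous fun t : ℝ => x - t • symOne N := by fun_prop
      simpa using (this.tendsto 0).mono_left nhdsWithin_le_nhds
    obtain ⟨t, ht, ht0⟩ :=
      ((hc.eventually (mem_interior_iff_mem_nhds.1 hx)).and self_mem_nhdsWithin).exists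
    have ht1 : (fromEuc N x - t • (1 : Matrix (Fin N) (Fin N) ℝ)).PosSemidef := mem_psdCone.1 ht
    have := (PosDef.one.smul ht0 : (t • (1 : Matrix (Fin N) (Fin N) ℝ)).PosDef).add_posSemidef ht1
    simpa using this
  rw [psdLeb_eq_map, (measurableEmbedding_coe N).ae_map_iff]
  have h0 : ∀ᵐ x ∂(symHaar N).restrict (psdCone N), x ∉ frontier (psdCone N) :=
    ae_restrict_of_ae (measure_eq_zero_iff_ae_notMem.1 (hconv.addHaar_frontier (symHaar N)))
  filter_upwards [h0, ae_restrict_mem (isClosed_psdCone N).measurableSet] with x hx hxK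
  apply hint
  rw [(isClosed_psdCone N).frontier_eq] at hx
  by_contra h
  exact hx ⟨hxK, h⟩

/-- A matrix entrywise close to the identity is diagonally dominant, hence PSD; so the cone has
nonempty interior. -/
lemma psdLeb_ne_zero (N : ℕ) : psdLeb N ≠ 0 := by
  intro h
  have hU : IsOpen {x : symSub N | ∀ p, |(x : MatEuc N) p - toEuc N 1 p| < 1 / ((N : ℝ) + 1)} := by
    simp only [Set.ofPred_forall]
    refine isOpen_iInter_of_finite fun p => isOpen_lt ?_ continuous_const
    fun_prop
  have hne : (symOne N) ∈
      {x : symSub N | ∀ p, |(x : MatEuc N) p - toEuc N 1 p| < 1 / ((N : ℝ) + 1)} := by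
    intro p
    have : (0 : ℝ) < 1 / ((N : ℝ) + 1) := by positivity
    simpa [symOne] using this
  have hsub : {x : symSub N | ∀ p, |(x : MatEuc N) p - toEuc N 1 p| < 1 / ((N : ℝ) + 1)}
      ⊆ psdCone N := by
    intro x hx
    refine mem_psdCone.2 (PosSemidef.of_dotProduct_mulVec_nonneg (mem_symSub.1 x.2) fun v => ?_)
    set D : Matrix (Fin N) (Fin N) ℝ := fromEuc N x - 1 with hD
    have hDb : ∀ i j, |D i j| ≤ 1 / ((N : ℝ) + 1) := fun i j => (hx (i, j)).le
    have hsplit : star v ⬝ᵥ (fromEuc N x *ᵥ v) = v ⬝ᵥ v + ∑ i, ∑ j, v i * D i j * v j := by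
      have : fromEuc N x = 1 + D := by rw [hD]; abel
      rw [this, add_mulVec, one_mulVec, dotProduct_add]
      simp [dotProduct, mulVec, Finset.mul_sum, mul_assoc]
    have hterm : ∀ i j, -(1 / ((N : ℝ) + 1) * ((v i ^ 2 + v j ^ 2) / 2)) ≤ v i * D i j * v j := by
      intro i j
      have h1 : |v i * D i j * v j| ≤ 1 / ((N : ℝ) + 1) * ((v i ^ 2 + v j ^ 2) / 2) := by
        rw [show v i * D i j * v j = D i j * (v i * v j) by ring, abs_mul]
        refine mul_le_mul (hDb i j) ?_ (abs_nonneg _) (by positivity)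
        rw [abs_le]
        constructor <;> nlinarith [sq_nonneg (v i + v j), sq_nonneg (v i - v j)]
      exact (abs_le.1 h1).1
    have hsum := Finset.sum_le_sum fun i (_ : i ∈ Finset.univ) =>
      Finset.sum_le_sum fun j (_ : j ∈ Finset.univ) => hterm i j
    have hval : ∑ i : Fin N, ∑ j : Fin N, -(1 / ((N : ℝ) + 1) * ((v i ^ 2 + v j ^ 2) / 2))
        = -((N : ℝ) / ((N : ℝ) + 1) * ∑ i, v i ^ 2) := by
      simp only [Finset.sum_neg_distrib, ← Finset.mul_sum, ← Finset.sum_div,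
        Finset.sum_add_distrib, Finset.sum_const, Finset.card_univ, Fintype.card_fin, nsmul_eq_mul]
      field_simp
      ring
    have hvv : v ⬝ᵥ v = ∑ i, v i ^ 2 := by simp [dotProduct, sq]
    have hS : 0 ≤ ∑ i, v i ^ 2 := Finset.sum_nonneg fun i _ => sq_nonneg _
    have hN : (N : ℝ) / ((N : ℝ) + 1) ≤ 1 := by
      rw [div_le_one (by positivity)]; linarith
    rw [hsplit, hvv]
    rw [hval] at hsum
    nlinarith
  have hpos : 0 < symHaar N (psdCone N) :=
    (hU.measure_pos _ ⟨_, hne⟩).trans_le (measure_mono hsub)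
  have : psdLeb N Set.univ = symHaar N (psdCone N) := by
    rw [psdLeb_eq_map, (measurableEmbedding_coe N).map_apply]
    simp
  rw [h] at this
  exact hpos.ne (by simpa using this)

lemma integrable_one_add_norm_psdLeb {N : ℕ} {r : ℝ}
    (hr : (Module.finrank ℝ (symSub N) : ℝ) < r) :
    Integrable (fun x : MatEuc N => (1 + ‖x‖) ^ (-r)) (psdLeb N) := by
  rw [psdLeb_eq_map, (measurableEmbedding_coe N).integrable_map_iff]
  exact (integrable_one_add_norm (μ := symHaar N) hr).restrict

/-! ### Exponential weights on the cone and their means -/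

/-- The exponential weight `e^{−tr(YQ)}`. -/
def expWeight (N : ℕ) (Y : Matrix (Fin N) (Fin N) ℝ) (x : MatEuc N) : ℝ :=
  Real.exp (-(Y * fromEuc N x).trace)

/-- The partition function `∫_{PSD(N)} e^{−tr(YQ)} dQ`. -/
def partFn (N : ℕ) (Y : Matrix (Fin N) (Fin N) ℝ) : ℝ := ∫ x, expWeight N Y x ∂psdLeb N

/-- The mean of the probability density proportional to `e^{−tr(YQ)}` on the cone. -/
def expMean (N : ℕ) (Y : Matrix (Fin N) (Fin N) ℝ) : Matrix (Fin N) (Fin N) ℝ :=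
  Matrix.of fun i j => (∫ x, x (i, j) * expWeight N Y x ∂psdLeb N) / partFn N Y

lemma expWeight_pos (N : ℕ) (Y : Matrix (Fin N) (Fin N) ℝ) (x : MatEuc N) :
    0 < expWeight N Y x := Real.exp_pos _

lemma continuous_expWeight (N : ℕ) (Y : Matrix (Fin N) (Fin N) ℝ) :
    Continuous (expWeight N Y) := by
  have := continuous_fromEuc N
  unfold expWeight
  exact Real.continuous_exp.comp (continuous_const.matrix_mul this).matrix_trace.neg

lemma abs_entry_le_trace {N : ℕ} {Q : Matrix (Fin N) (Fin N) ℝ} (hQ : Q.PosSemidef)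
    (i j : Fin N) : |Q i j| ≤ Q.trace := by
  have hs : Q j i = Q i j := by simpa using congrFun (congrFun hQ.isHermitian i) j
  have h1 := hQ.dotProduct_mulVec_nonneg (Pi.single i 1 + Pi.single j 1)
  have h2 := hQ.dotProduct_mulVec_nonneg (Pi.single i 1 - Pi.single j 1)
  simp [add_dotProduct, sub_dotProduct, mulVec_add, mulVec_sub, dotProduct_add,
    dotProduct_sub] at h1 h2
  have hd : ∀ l, Q l l ≤ Q.trace := fun l =>
    Finset.single_le_sum (f := fun l => Q l l) (fun l _ => hQ.diag_nonneg) (Finset.mem_univ l)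
  have := hd i
  have := hd j
  rw [abs_le]
  constructor <;> linarith

lemma norm_le_trace {N : ℕ} {x : MatEuc N} (hx : (fromEuc N x).PosSemidef) :
    ‖x‖ ≤ N * (fromEuc N x).trace := by
  have ht := hx.trace_nonneg
  rw [EuclideanSpace.norm_eq]
  refine Real.sqrt_le_iff.2 ⟨by positivity, ?_⟩
  calc ∑ p, ‖x p‖ ^ 2 ≤ ∑ _p : Fin N × Fin N, (fromEuc N x).trace ^ 2 := by
        refine Finset.sum_le_sum fun p _ => pow_le_pow_left₀ (norm_nonneg _) ?_ 2
        exact abs_entry_le_trace hx p.1 p.2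
    _ = _ := by
        simp
        ring

lemma integrable_expWeight_one (N : ℕ) :
    Integrable (fun x => (1 + ‖x‖) * expWeight N 1 x) (psdLeb N) := by
  set k := Module.finrank ℝ (symSub N) with hk
  have hint := integrable_one_add_norm_psdLeb (N := N) (r := ((k + 1 : ℕ) : ℝ))
    (by rw [← hk]; push_cast; linarith)
  refine (hint.const_mul (((N : ℝ) + 1) ^ (k + 2) * ((k + 2).factorial * Real.exp 1))).mono'
    ?_ ?_
  · have := continuous_expWeight N 1
    exact Continuous.aestronglyMeasurable (by fun_prop)
  · filter_upwards [ae_posSemidef N] with x hx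
    have ht := hx.trace_nonneg
    set t := (fromEuc N x).trace with htdef
    have hw : expWeight N 1 x = Real.exp (-t) := by rw [expWeight, one_mul]
    have hpos := expWeight_pos N 1 x
    rw [Real.norm_of_nonneg (by positivity), hw, Real.rpow_neg (by positivity),
      Real.rpow_natCast]
    have h1 : 1 + ‖x‖ ≤ ((N : ℝ) + 1) * (1 + t) := by
      have := norm_le_trace hx
      have hN : (0 : ℝ) ≤ N := by positivity
      nlinarith
    have h2 : (1 + t) ^ (k + 2) ≤ (k + 2).factorial * (Real.exp 1 * Real.exp t) := by
      have := Real.pow_div_factorial_le_exp (1 + t) (by positivity) (k + 2)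
      rw [div_le_iff₀ (by positivity)] at this
      rw [← Real.exp_add]
      linarith
    have h3 : (1 + ‖x‖) ^ (k + 2)
        ≤ ((N : ℝ) + 1) ^ (k + 2) * ((k + 2).factorial * (Real.exp 1 * Real.exp t)) :=
      calc (1 + ‖x‖) ^ (k + 2) ≤ (((N : ℝ) + 1) * (1 + t)) ^ (k + 2) :=
            pow_le_pow_left₀ (by positivity) h1 _
        _ = ((N : ℝ) + 1) ^ (k + 2) * (1 + t) ^ (k + 2) := mul_pow _ _ _
        _ ≤ _ := by gcongr
    rw [← div_eq_mul_inv, le_div_iff₀ (by positivity)]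
    calc (1 + ‖x‖) * Real.exp (-t) * (1 + ‖x‖) ^ (k + 1)
        = (1 + ‖x‖) ^ (k + 2) * Real.exp (-t) := by ring
      _ ≤ ((N : ℝ) + 1) ^ (k + 2) * ((k + 2).factorial * (Real.exp 1 * Real.exp t))
            * Real.exp (-t) := by gcongr
      _ = ((N : ℝ) + 1) ^ (k + 2) * ((k + 2).factorial * Real.exp 1)
            * (Real.exp t * Real.exp (-t)) := by ring
      _ = _ := by rw [← Real.exp_add, add_neg_cancel, Real.exp_zero, mul_one]

/-- The congruence `Q ↦ A Q Aᵀ` turns the weight for `Y` into the weight for `1`, up to a constant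
Jacobian whose value is irrelevant. -/
lemma exists_conj_integral {N : ℕ} {A Y : Matrix (Fin N) (Fin N) ℝ} (hA : IsUnit A)
    (hAY : Aᵀ * Y * A = 1) :
    ∃ c : ℝ, 0 < c ∧
      (∀ h : MatEuc N → ℝ, ∫ x, h (conjMap N A x) * expWeight N 1 x ∂psdLeb N
        = c * ∫ x, h x * expWeight N Y x ∂psdLeb N) ∧
      (∀ h : MatEuc N → ℝ,
        Integrable (fun x => h (conjMap N A x) * expWeight N 1 x) (psdLeb N) →
        Integrable (fun x => h x * expWeight N Y x) (psdLeb N)) := by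
  obtain ⟨c, hc0, hc1, hmap⟩ := map_conjMap hA
  have hinj : Function.Injective (conjMap N A) := by
    intro x y hxy
    have h : A * fromEuc N x * Aᵀ = A * fromEuc N y * Aᵀ := congrArg (fromEuc N) hxy
    have h' := hA.mul_left_cancel
      (((isUnit_transpose (A := A)).2 hA).mul_right_cancel h)
    simpa using congrArg (toEuc N) h'
  have he : MeasurableEmbedding (conjMap N A) :=
    (LinearMap.isClosedEmbedding_of_injective (LinearMap.ker_eq_bot.2 hinj)).measurableEmbedding
  have hw : ∀ x, expWeight N Y (conjMap N A x) = expWeight N 1 x := by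
    intro x
    rw [expWeight, expWeight, fromEuc_conjMap, one_mul, ← mul_assoc, trace_mul_comm,
      ← mul_assoc, ← mul_assoc, hAY, one_mul]
  refine ⟨c.toReal, ENNReal.toReal_pos hc0 hc1, fun h => ?_, fun h hh => ?_⟩
  · have := he.integral_map (μ := psdLeb N) (fun x => h x * expWeight N Y x)
    rw [hmap, integral_smul_measure] at this
    simp only [hw] at this
    rw [← this, smul_eq_mul]
  · have : Integrable (fun x => h x * expWeight N Y x) (Measure.map (conjMap N A) (psdLeb N)) := by
      rw [he.integrable_map_iff]
      simpa [Function.comp_def, hw] using hh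
    rw [hmap] at this
    exact (integrable_smul_measure hc0 hc1).1 this

open scoped MatrixOrder Matrix.Norms.L2Operator in
lemma exists_conj_eq_one {N : ℕ} {Y : Matrix (Fin N) (Fin N) ℝ} (hY : Y.PosDef) :
    ∃ A : Matrix (Fin N) (Fin N) ℝ, IsUnit A ∧ Aᵀ * Y * A = 1 ∧ A * Aᵀ = Y⁻¹ := by
  obtain ⟨B, hB, hBY⟩ : ∃ B : Matrix (Fin N) (Fin N) ℝ, IsUnit B ∧ Y = Bᵀ * B := by
    obtain ⟨B, hB⟩ := CStarAlgebra.nonneg_iff_eq_star_mul_self.mp hY.posSemidef.nonneg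
    rw [star_eq_conjTranspose, conjTranspose_eq_transpose_of_trivial] at hB
    exact ⟨B, isUnit_of_mul_isUnit_right (hB ▸ hY.isUnit), hB⟩
  have hBdet := (isUnit_iff_isUnit_det B).1 hB
  refine ⟨B⁻¹, (isUnit_nonsing_inv_iff).2 hB, ?_, ?_⟩
  · rw [hBY, ← mul_assoc, ← transpose_mul, mul_nonsing_inv _ hBdet, transpose_one, one_mul,
      mul_nonsing_inv _ hBdet]
  · rw [hBY, Matrix.mul_inv_rev, transpose_nonsing_inv]

lemma integrable_expWeight {N : ℕ} {Y : Matrix (Fin N) (Fin N) ℝ} (hY : Y.PosDef) :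
    Integrable (fun x => (1 + ‖x‖) * expWeight N Y x) (psdLeb N) := by
  obtain ⟨A, hA, hAY, -⟩ := exists_conj_eq_one hY
  obtain ⟨c, -, -, h⟩ := exists_conj_integral hA hAY
  refine h (fun x => 1 + ‖x‖) ?_
  set T := LinearMap.toContinuousLinearMap (conjMap N A) with hT
  refine ((integrable_expWeight_one N).const_mul (1 + ‖T‖)).mono' ?_ (ae_of_all _ fun x => ?_)
  · have h1 := continuous_expWeight N 1
    have h2 : Continuous (conjMap N A) := LinearMap.continuous_of_finiteDimensional _
    exact Continuous.aestronglyMeasurable (by fun_prop)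
  · have hpos := expWeight_pos N 1 x
    rw [Real.norm_of_nonneg (by positivity), ← mul_assoc]
    gcongr
    have : ‖conjMap N A x‖ ≤ ‖T‖ * ‖x‖ := T.le_opNorm x
    nlinarith [norm_nonneg x, norm_nonneg T]

lemma integrable_expWeight' {N : ℕ} {Y : Matrix (Fin N) (Fin N) ℝ} (hY : Y.PosDef) :
    Integrable (expWeight N Y) (psdLeb N) := by
  refine (integrable_expWeight hY).mono' (continuous_expWeight N Y).aestronglyMeasurable
    (ae_of_all _ fun x => ?_)
  rw [Real.norm_of_nonneg (expWeight_pos N Y x).le]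
  nlinarith [norm_nonneg x, expWeight_pos N Y x, mul_nonneg (norm_nonneg x) (expWeight_pos N Y x).le]

lemma integrable_entry_expWeight {N : ℕ} {Y : Matrix (Fin N) (Fin N) ℝ} (hY : Y.PosDef)
    (p : Fin N × Fin N) : Integrable (fun x => x p * expWeight N Y x) (psdLeb N) := by
  refine (integrable_expWeight hY).mono' ?_ (ae_of_all _ fun x => ?_)
  · have := continuous_expWeight N Y
    exact Continuous.aestronglyMeasurable (by fun_prop)
  · rw [norm_mul, Real.norm_of_nonneg (expWeight_pos N Y x).le]
    have := expWeight_pos N Y x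
    have := PiLp.norm_apply_le x p
    gcongr
    linarith

lemma partFn_pos {N : ℕ} {Y : Matrix (Fin N) (Fin N) ℝ} (hY : Y.PosDef) : 0 < partFn N Y := by
  have : NeZero (psdLeb N) := ⟨psdLeb_ne_zero N⟩
  exact integral_exp_pos (integrable_expWeight' hY)

/-- The Jacobian cancels in the mean, so the mean transforms covariantly under congruence. -/
lemma expMean_conj {N : ℕ} {A Y : Matrix (Fin N) (Fin N) ℝ} (hA : IsUnit A)
    (hAY : Aᵀ * Y * A = 1) : expMean N Y = A * expMean N 1 * Aᵀ := by
  obtain ⟨c, hc, hi, -⟩ := exists_conj_integral hA hAY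
  have hZ : partFn N 1 = c * partFn N Y := by
    simpa [partFn] using hi fun _ => 1
  have hcz : ∀ a : ℝ, a / partFn N Y = (c * a) / partFn N 1 := fun a => by
    rw [hZ, mul_div_mul_left _ _ hc.ne']
  ext i j
  rw [expMean, of_apply, hcz, ← hi fun x => x (i, j)]
  have hexp : ∀ x : MatEuc N, conjMap N A x (i, j) * expWeight N 1 x
      = ∑ l, ∑ k, A i k * A j l * (x (k, l) * expWeight N 1 x) := by
    intro x
    change (A * fromEuc N x * Aᵀ) i j * expWeight N 1 x = _
    simp only [mul_apply, transpose_apply, Finset.sum_mul, fromEuc_apply]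
    refine Finset.sum_congr rfl fun l _ => Finset.sum_congr rfl fun k _ => by ring
  have hint : ∀ k l, Integrable (fun x => A i k * A j l * (x (k, l) * expWeight N 1 x))
      (psdLeb N) := fun k l => (integrable_entry_expWeight PosDef.one (k, l)).const_mul _
  simp only [hexp]
  rw [integral_finsetSum _ fun l _ => integrable_finsetSum _ fun k _ => hint k l]
  simp only [mul_apply, transpose_apply, Finset.sum_mul, expMean, of_apply, Finset.sum_div]
  refine Finset.sum_congr rfl fun l _ => ?_
  rw [integral_finsetSum _ fun k _ => hint k l, Finset.sum_div]
  refine Finset.sum_congr rfl fun k _ => ?_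
  rw [integral_const_mul]
  ring

/-- Homogeneity of Lebesgue measure under dilations determines the mean trace: the convex function
`s ↦ ∫ e^{−s tr Q} dQ` equals `s⁻ᵈ` times a constant, and its tangent line at `s = 1` has slope
minus the integral of the trace. -/
lemma trace_expMean_one (N : ℕ) : (expMean N 1).trace = (N : ℝ) * ((N : ℝ) + 1) / 2 := by
  set k := Module.finrank ℝ (symSub N) with hk
  have hZ := partFn_pos (N := N) PosDef.one
  set Z := partFn N 1 with hZdef
  set T := ∫ x, (fromEuc N x).trace * expWeight N 1 x ∂psdLeb N with hT
  have hexp : ∀ x : MatEuc N, (fromEuc N x).trace * expWeight N 1 x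
      = ∑ i, x (i, i) * expWeight N 1 x := fun x => by
    simp only [trace, diag, fromEuc_apply, Finset.sum_mul]
  have hTint : Integrable (fun x => (fromEuc N x).trace * expWeight N 1 x) (psdLeb N) := by
    simp only [hexp]
    exact integrable_finsetSum _ fun i _ => integrable_entry_expWeight PosDef.one (i, i)
  have htr : (expMean N 1).trace = T / Z := by
    rw [hT]
    simp only [hexp]
    rw [integral_finsetSum _ fun i _ => integrable_entry_expWeight PosDef.one (i, i),
      Finset.sum_div]
    rfl
  have hineq : ∀ s : ℝ, 0 < s → 0 ≤ (s ^ k)⁻¹ * Z - Z + (s - 1) * T := by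
    intro s hs
    have h1 := integral_smul_psdLeb hs (expWeight N 1)
    have hs1 : (s • (1 : Matrix (Fin N) (Fin N) ℝ)).PosDef := PosDef.one.smul hs
    have hws : ∀ x, expWeight N 1 (s • x) = expWeight N (s • 1) x := fun x => by
      simp [expWeight, fromEuc_smul]
    simp only [hws] at h1
    have h2 : ∫ x, (expWeight N 1 x - (s - 1) * ((fromEuc N x).trace * expWeight N 1 x)) ∂psdLeb N
        ≤ ∫ x, expWeight N (s • 1) x ∂psdLeb N := by
      refine integral_mono ((integrable_expWeight' PosDef.one).sub (hTint.const_mul _))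
        (integrable_expWeight' hs1) fun x => ?_
      set t := (fromEuc N x).trace with ht
      have e1 : expWeight N 1 x = Real.exp (-t) := by simp [expWeight, ht]
      have e2 : expWeight N (s • 1) x = Real.exp (-t) * Real.exp (-((s - 1) * t)) := by
        rw [← Real.exp_add]
        simp only [expWeight, smul_mul, one_mul, trace_smul, smul_eq_mul, ← ht]
        congr 1
        ring
      have := Real.add_one_le_exp (-((s - 1) * t))
      have := mul_le_mul_of_nonneg_left this (Real.exp_pos (-t)).le
      simp only [e1, e2]
      linarith
    rw [integral_sub (integrable_expWeight' PosDef.one) (hTint.const_mul _),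
      integral_const_mul, h1] at h2
    change Z - (s - 1) * T ≤ (s ^ k)⁻¹ * Z at h2
    linarith
  have hmin : IsLocalMin (fun s : ℝ => (s ^ k)⁻¹ * Z - Z + (s - 1) * T) 1 := by
    filter_upwards [lt_mem_nhds (zero_lt_one' ℝ)] with s hs
    simpa using hineq s hs
  have hder : HasDerivAt (fun s : ℝ => (s ^ k)⁻¹ * Z - Z + (s - 1) * T) (-k * Z + T) 1 := by
    have h := ((((hasDerivAt_pow k (1 : ℝ)).inv (by simp)).mul_const Z).sub_const Z).add
      (((hasDerivAt_id (1 : ℝ)).sub_const 1).mul_const T)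
    exact h.congr_deriv (by simp)
  have := hmin.hasDerivAt_eq_zero hder
  rw [htr, ← finrank_symSub, ← hk, div_eq_iff hZ.ne']
  linarith

/-- Invariance under sign changes and transpositions of coordinates makes the mean for `Y = 1` a
scalar matrix. -/
lemma expMean_one (N : ℕ) : expMean N 1 = (((N : ℝ) + 1) / 2) • 1 := by
  have horth : ∀ A : Matrix (Fin N) (Fin N) ℝ, Aᵀ * A = 1 → expMean N 1 * A = A * expMean N 1 := by
    intro A hA
    have hu : IsUnit A := (isUnit_iff_isUnit_det A).2 (isUnit_det_of_left_inverse hA)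
    have h := expMean_conj hu (Y := 1) (by rw [mul_one, hA])
    calc expMean N 1 * A = A * expMean N 1 * Aᵀ * A := by rw [← h]
      _ = _ := by rw [mul_assoc, hA, mul_one]
  have hoff : ∀ i j, i ≠ j → expMean N 1 i j = 0 := by
    intro i j hij
    have h := horth (diagonal fun l => if l = i then -1 else 1) (by
      rw [diagonal_transpose, diagonal_mul_diagonal, ← diagonal_one]
      congr 1
      funext l
      split_ifs <;> simp)
    have h' := congrFun (congrFun h i) j
    rw [mul_diagonal, diagonal_mul] at h'
    simp [hij.symm] at h'
    linarith
  have hdiag : ∀ i j, expMean N 1 i i = expMean N 1 j j := by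
    intro i j
    have h := horth (swap ℝ i j) (by rw [transpose_swap, swap_mul_self])
    have h' := congrFun (congrFun h i) j
    simpa using h'
  ext i j
  by_cases hij : i = j
  · subst hij
    have ht := trace_expMean_one N
    have hsum : (expMean N 1).trace = N * expMean N 1 i i := by
      simp [trace, fun l => hdiag l i]
    have hN : (N : ℝ) ≠ 0 := by
      have := i.pos
      positivity
    rw [hsum] at ht
    have : expMean N 1 i i = ((N : ℝ) + 1) / 2 := by
      apply mul_left_cancel₀ hN
      rw [ht]
      ring
    simp [this]
  · simp [hoff i j hij, hij]

lemma expMean_eq {N : ℕ} {Y : Matrix (Fin N) (Fin N) ℝ} (hY : Y.PosDef) :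
    expMean N Y = (((N : ℝ) + 1) / 2) • Y⁻¹ := by
  obtain ⟨A, hA, hAY, hAA⟩ := exists_conj_eq_one hY
  rw [expMean_conj hA hAY, expMean_one, Matrix.mul_smul, Matrix.smul_mul, mul_one, hAA]

/-! ### Gibbs' inequality and duality -/

lemma trace_mul_fromEuc {N : ℕ} (Y : Matrix (Fin N) (Fin N) ℝ) (x : MatEuc N) :
    (Y * fromEuc N x).trace = ∑ i, ∑ j, Y i j * x (j, i) := rfl

/-- A density on the cone with mean `P`, as a function on Euclidean space; the sign
condition holds only almost everywhere, since admissibility leaves the sign at singular matrices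
free. -/
structure IsDensityWithMean (N : ℕ) (P : Matrix (Fin N) (Fin N) ℝ) (f : MatEuc N → ℝ) : Prop where
  nonneg : ∀ᵐ x ∂psdLeb N, 0 ≤ f x
  integrable : Integrable f (psdLeb N)
  integrable_log : Integrable (fun x => f x * Real.log (f x)) (psdLeb N)
  integrable_entry : ∀ i j, Integrable (fun x => f x * x (i, j)) (psdLeb N)
  integral_eq_one : ∫ x, f x ∂psdLeb N = 1
  integral_entry : ∀ i j, ∫ x, f x * x (i, j) ∂psdLeb N = P i j

lemma IsAdmissible.isDensityWithMean {N : ℕ} {P : Matrix (Fin N) (Fin N) ℝ}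
    {f : Matrix (Fin N) (Fin N) ℝ → ℝ} (hf : IsAdmissible N P f) :
    IsDensityWithMean N P fun x => f (fromEuc N x) := by
  obtain ⟨hpos, -, hint, hlog, hentry, hone, hmean⟩ := hf
  exact ⟨(ae_posDef N).mono fun x hx => (hpos _ hx).le, hint, hlog, hentry, hone, hmean⟩

namespace IsDensityWithMean

variable {N : ℕ} {P : Matrix (Fin N) (Fin N) ℝ} {f : MatEuc N → ℝ}

lemma integrable_trace (hf : IsDensityWithMean N P f) (Y : Matrix (Fin N) (Fin N) ℝ) :
    Integrable (fun x => f x * (Y * fromEuc N x).trace) (psdLeb N) := by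
  simp only [trace_mul_fromEuc, Finset.mul_sum, mul_left_comm (f _)]
  exact integrable_finsetSum _ fun i _ => integrable_finsetSum _ fun j _ =>
    (hf.integrable_entry j i).const_mul _

lemma integral_trace (hf : IsDensityWithMean N P f) (Y : Matrix (Fin N) (Fin N) ℝ) :
    ∫ x, f x * (Y * fromEuc N x).trace ∂psdLeb N = (Y * P).trace := by
  simp only [trace_mul_fromEuc, Finset.mul_sum, mul_left_comm (f _)]
  have h : ∀ i j, Integrable (fun x => Y i j * (f x * x (j, i))) (psdLeb N) := fun i j =>
    (hf.integrable_entry j i).const_mul _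
  rw [integral_finsetSum _ fun i _ => integrable_finsetSum _ fun j _ => h i j]
  change _ = ∑ i, ∑ j, Y i j * P j i
  refine Finset.sum_congr rfl fun i _ => ?_
  rw [integral_finsetSum _ fun j _ => h i j]
  refine Finset.sum_congr rfl fun j _ => ?_
  rw [integral_const_mul, hf.integral_entry]

end IsDensityWithMean

/-- Pointwise form of the nonnegativity of relative entropy. -/
lemma gibbs_pointwise {a b : ℝ} (ha : 0 ≤ a) (hb : 0 < b) :
    0 ≤ b - a + a * Real.log a - a * Real.log b ∧
      (b - a + a * Real.log a - a * Real.log b = 0 → a = b) := by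
  rcases ha.eq_or_lt with rfl | ha
  · simp [hb.le, eq_comm]
  have hlog : Real.log (b / a) = Real.log b - Real.log a := Real.log_div hb.ne' ha.ne'
  have hfac : b - a + a * Real.log a - a * Real.log b = a * (b / a - 1 - Real.log (b / a)) := by
    rw [hlog]
    field_simp
    ring
  rw [hfac]
  have hle := Real.log_le_sub_one_of_pos (div_pos hb ha)
  refine ⟨mul_nonneg ha.le (by linarith), fun h => ?_⟩
  by_contra hne
  have hne' : b / a ≠ 1 := fun h1 => hne ((div_eq_one_iff_eq ha.ne').1 h1).symm
  have := Real.log_lt_sub_one_of_pos (div_pos hb ha) hne'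
  have := mul_pos ha (show 0 < b / a - 1 - Real.log (b / a) by linarith)
  linarith

/-- Weak duality: the gap between the dual objective and the entropy is the integral of a
nonnegative function (the relative entropy of `f` with respect to the normalised weight), so it
vanishes only if `f` is the normalised weight. -/
lemma weak_duality {N : ℕ} {P Y : Matrix (Fin N) (Fin N) ℝ} {f : MatEuc N → ℝ}
    (hf : IsDensityWithMean N P f) (hY : Y.PosDef) :
    ∫ x, -(f x * Real.log (f x)) ∂psdLeb N ≤ dualFn N P Y ∧
      (∫ x, -(f x * Real.log (f x)) ∂psdLeb N = dualFn N P Y →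
        ∀ᵐ x ∂psdLeb N, f x = expWeight N Y x / partFn N Y) := by
  have hZ := partFn_pos hY
  have hlogw : ∀ x, Real.log (expWeight N Y x / partFn N Y)
      = -(Y * fromEuc N x).trace - Real.log (partFn N Y) := fun x => by
    rw [Real.log_div (expWeight_pos N Y x).ne' hZ.ne', expWeight, Real.log_exp]
  have i1 : Integrable (fun x => expWeight N Y x / partFn N Y) (psdLeb N) :=
    (integrable_expWeight' hY).div_const _
  have i2 := hf.integrable
  have i3 := hf.integrable_log
  have i4 := hf.integrable_trace Y
  have i5 := hf.integrable.mul_const (Real.log (partFn N Y))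
  have i6 : Integrable (fun x => expWeight N Y x / partFn N Y - f x) (psdLeb N) := i1.sub i2
  have i7 : Integrable (fun x => expWeight N Y x / partFn N Y - f x + f x * Real.log (f x))
      (psdLeb N) := i6.add i3
  have i8 : Integrable (fun x => expWeight N Y x / partFn N Y - f x + f x * Real.log (f x)
      + f x * (Y * fromEuc N x).trace) (psdLeb N) := i7.add i4
  have hfun : ∀ x, expWeight N Y x / partFn N Y - f x + f x * Real.log (f x)
        - f x * Real.log (expWeight N Y x / partFn N Y)
      = expWeight N Y x / partFn N Y - f x + f x * Real.log (f x)
        + f x * (Y * fromEuc N x).trace + f x * Real.log (partFn N Y) := fun x => by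
    rw [hlogw]
    ring
  have hint : Integrable (fun x => expWeight N Y x / partFn N Y - f x + f x * Real.log (f x)
        - f x * Real.log (expWeight N Y x / partFn N Y)) (psdLeb N) := by
    simp only [hfun]
    exact i8.add i5
  have hnn : 0 ≤ᵐ[psdLeb N] fun x => expWeight N Y x / partFn N Y - f x + f x * Real.log (f x)
        - f x * Real.log (expWeight N Y x / partFn N Y) :=
    hf.nonneg.mono fun x hx => (gibbs_pointwise hx (div_pos (expWeight_pos N Y x) hZ)).1
  have hval : ∫ x, (expWeight N Y x / partFn N Y - f x + f x * Real.log (f x)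
        - f x * Real.log (expWeight N Y x / partFn N Y)) ∂psdLeb N
      = dualFn N P Y - ∫ x, -(f x * Real.log (f x)) ∂psdLeb N := by
    have hg : ∫ x, expWeight N Y x / partFn N Y ∂psdLeb N = 1 := by
      rw [integral_div]
      exact div_self hZ.ne'
    simp only [hfun]
    rw [integral_add i8 i5, integral_add i7 i4, integral_add i6 i3, integral_sub i1 i2, hg, hf.integral_eq_one,
      hf.integral_trace, integral_mul_const, hf.integral_eq_one, integral_neg]
    change _ = (Y * P).trace + Real.log (partFn N Y) - _
    ring
  constructor
  · have := integral_nonneg_of_ae hnn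
    rw [hval] at this
    linarith
  · intro h
    have h0 := (integral_eq_zero_iff_of_nonneg_ae hnn hint).1 (by rw [hval, h, sub_self])
    filter_upwards [h0, hf.nonneg] with x hx hfx
    exact (gibbs_pointwise hfx (div_pos (expWeight_pos N Y x) hZ)).2 hx

/-- The dual optimum `Y* = ((N+1)/2)·P⁻¹`. -/
abbrev ystar (N : ℕ) (P : Matrix (Fin N) (Fin N) ℝ) : Matrix (Fin N) (Fin N) ℝ :=
  (((N : ℝ) + 1) / 2) • P⁻¹

lemma ystar_posDef {N : ℕ} {P : Matrix (Fin N) (Fin N) ℝ} (hP : P.PosDef) :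
    (ystar N P).PosDef := hP.inv.smul (by positivity)

lemma ystar_eq_iff {N : ℕ} {P Y : Matrix (Fin N) (Fin N) ℝ} (hP : P.PosDef) (hY : Y.PosDef) :
    (((N : ℝ) + 1) / 2) • Y⁻¹ = P ↔ Y = ystar N P := by
  have hc : ((N : ℝ) + 1) / 2 ≠ 0 := by positivity
  have hPd := (isUnit_iff_isUnit_det P).1 hP.isUnit
  have hYd := (isUnit_iff_isUnit_det Y).1 hY.isUnit
  constructor
  · intro h
    have h1 : Y * P = (((N : ℝ) + 1) / 2) • 1 := by
      rw [← h, Matrix.mul_smul, mul_nonsing_inv _ hYd]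
    calc Y = Y * P * P⁻¹ := by rw [mul_assoc, mul_nonsing_inv _ hPd, mul_one]
      _ = _ := by rw [h1, Matrix.smul_mul, one_mul]
  · intro h
    have h1 : Y * P = (((N : ℝ) + 1) / 2) • 1 := by
      rw [h, Matrix.smul_mul, nonsing_inv_mul _ hPd]
    calc (((N : ℝ) + 1) / 2) • Y⁻¹ = Y⁻¹ * ((((N : ℝ) + 1) / 2) • 1) := by
          rw [Matrix.mul_smul, mul_one]
      _ = Y⁻¹ * (Y * P) := by rw [h1]
      _ = P := by rw [← mul_assoc, nonsing_inv_mul _ hYd, one_mul]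

lemma fstar_of_posSemidef {N : ℕ} (P : Matrix (Fin N) (Fin N) ℝ) {x : MatEuc N}
    (hx : (fromEuc N x).PosSemidef) :
    fstar N P (fromEuc N x) = expWeight N (ystar N P) x / partFn N (ystar N P) :=
  Set.indicator_of_mem (s := {Q : Matrix (Fin N) (Fin N) ℝ | Q.PosSemidef}) hx _

lemma fstar_isAdmissible {N : ℕ} {P : Matrix (Fin N) (Fin N) ℝ} (hP : P.PosDef) :
    IsAdmissible N P (fstar N P) := by
  have hY := ystar_posDef hP
  have hZ := partFn_pos hY
  set Z := partFn N (ystar N P) with hZdef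
  have hae : ∀ᵐ x ∂psdLeb N, fstar N P (fromEuc N x) = expWeight N (ystar N P) x / Z :=
    (ae_posSemidef N).mono fun x hx => fstar_of_posSemidef P hx
  have i1 : Integrable (fun x => expWeight N (ystar N P) x / Z) (psdLeb N) :=
    (integrable_expWeight' hY).div_const _
  have i2 : ∀ i j, Integrable (fun x => expWeight N (ystar N P) x / Z * x (i, j)) (psdLeb N) := by
    intro i j
    refine ((integrable_entry_expWeight hY (i, j)).div_const Z).congr (ae_of_all _ fun x => ?_)
    ring
  refine ⟨fun Q hQ => ?_, fun Q hQ => Set.indicator_of_notMem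
    (s := {Q : Matrix (Fin N) (Fin N) ℝ | Q.PosSemidef}) hQ _, ?_, ?_, fun i j => ?_, ?_,
    fun i j => ?_⟩
  · have := fstar_of_posSemidef P (x := toEuc N Q) hQ.posSemidef
    rw [fromEuc_toEuc] at this
    rw [this]
    exact div_pos (expWeight_pos _ _ _) hZ
  · exact i1.congr (hae.mono fun x hx => hx.symm)
  · have hlog : ∀ x, expWeight N (ystar N P) x / Z * Real.log (expWeight N (ystar N P) x / Z)
        = -(∑ i, ∑ j, ystar N P i j * (expWeight N (ystar N P) x / Z * x (j, i)))
          - expWeight N (ystar N P) x / Z * Real.log Z := fun x => by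
      rw [Real.log_div (expWeight_pos N _ x).ne' hZ.ne']
      conv_lhs => rw [mul_sub, expWeight, Real.log_exp, ← expWeight, trace_mul_fromEuc]
      simp only [mul_left_comm (ystar N P _ _), ← Finset.mul_sum]
      ring
    have i3 : Integrable (fun x => expWeight N (ystar N P) x / Z *
        Real.log (expWeight N (ystar N P) x / Z)) (psdLeb N) := by
      simp only [hlog]
      exact (integrable_finsetSum _ fun i _ => integrable_finsetSum _ fun j _ =>
        (i2 j i).const_mul _).neg.sub (i1.mul_const _)
    exact i3.congr (hae.mono fun x hx => by simp only [hx])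
  · exact (i2 i j).congr (hae.mono fun x hx => by simp only [hx, fromEuc_apply])
  · calc ∫ x, fstar N P (fromEuc N x) ∂psdLeb N
        = ∫ x, expWeight N (ystar N P) x / Z ∂psdLeb N := integral_congr_ae hae
      _ = 1 := by rw [integral_div]; exact div_self hZ.ne'
  · calc ∫ x, fstar N P (fromEuc N x) * fromEuc N x i j ∂psdLeb N
        = ∫ x, (x (i, j) * expWeight N (ystar N P) x) / Z ∂psdLeb N :=
          integral_congr_ae (hae.mono fun x hx => by
            simp only [hx, fromEuc_apply]
            ring)
      _ = expMean N (ystar N P) i j := by rw [integral_div]; rfl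
      _ = P i j := by rw [expMean_eq hY, (ystar_eq_iff hP hY).2 rfl]

lemma entropyOf_fstar {N : ℕ} {P : Matrix (Fin N) (Fin N) ℝ} (hP : P.PosDef) :
    entropyOf N (fstar N P) = dualFn N P (ystar N P) := by
  have hY := ystar_posDef hP
  have hZ := partFn_pos hY
  have hf := (fstar_isAdmissible hP).isDensityWithMean
  have hlog : ∀ᵐ x ∂psdLeb N, -(fstar N P (fromEuc N x) * Real.log (fstar N P (fromEuc N x)))
      = fstar N P (fromEuc N x) * (ystar N P * fromEuc N x).trace
        + fstar N P (fromEuc N x) * Real.log (partFn N (ystar N P)) := by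
    filter_upwards [ae_posSemidef N] with x hx
    have h : Real.log (fstar N P (fromEuc N x))
        = -(ystar N P * fromEuc N x).trace - Real.log (partFn N (ystar N P)) := by
      rw [fstar_of_posSemidef P hx, Real.log_div (expWeight_pos N _ x).ne' hZ.ne', expWeight,
        Real.log_exp]
    rw [h]
    ring
  calc entropyOf N (fstar N P)
      = ∫ x, -(fstar N P (fromEuc N x) * Real.log (fstar N P (fromEuc N x))) ∂psdLeb N := rfl
    _ = _ := integral_congr_ae hlog
    _ = (ystar N P * P).trace + Real.log (partFn N (ystar N P)) := by
        rw [integral_add (hf.integrable_trace _) (hf.integrable.mul_const _),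
          hf.integral_trace, integral_mul_const, hf.integral_eq_one, one_mul]
    _ = _ := rfl

/-- Two normalised weights that agree almost everywhere have the same mean, and the mean
determines the parameter. -/
lemma ystar_unique {N : ℕ} {P Y : Matrix (Fin N) (Fin N) ℝ} (hP : P.PosDef) (hY : Y.PosDef)
    (h : dualFn N P Y = dualFn N P (ystar N P)) : Y = ystar N P := by
  have hf := (fstar_isAdmissible hP).isDensityWithMean
  have hae := (weak_duality hf hY).2 ((entropyOf_fstar hP).trans h.symm)
  rw [← ystar_eq_iff hP hY, ← expMean_eq hY]
  ext i j
  rw [← hf.integral_entry i j, expMean, of_apply, ← integral_div]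
  refine integral_congr_ae (hae.mono fun x hx => ?_)
  simp only [hx]
  ring

/-- Theorem `thm:strong_duality` (maximum-entropy duality over the PSD cone).
For `P ∈ PD(N)`, the maximum differential entropy `φ(P)` over densities on
`PSD(N)` with expectation `P` equals the dual optimum
`inf_{Y ∈ PD(N)} [tr(YP) + log ∫_{PSD(N)} e^{−tr(YQ)} dQ]`, whose unique
minimizer is `Y* = ((N+1)/2)·P⁻¹`; moreover the supremum is attained by the
density `f*`, which is admissible (in particular has expectation `P`) and has
differential entropy `φ(P)`. -/
theorem strong_duality (N : ℕ) (P : Matrix (Fin N) (Fin N) ℝ) (hP : P.PosDef) :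
    sSup {h : ℝ | ∃ f, IsAdmissible N P f ∧ h = entropyOf N f} =
        sInf {v : ℝ | ∃ Y : Matrix (Fin N) (Fin N) ℝ, Y.PosDef ∧ v = dualFn N P Y} ∧
    (∀ Y : Matrix (Fin N) (Fin N) ℝ, Y.PosDef →
      dualFn N P ((((N : ℝ) + 1) / 2) • P⁻¹) ≤ dualFn N P Y) ∧
    (∀ Y : Matrix (Fin N) (Fin N) ℝ, Y.PosDef →
      dualFn N P Y = dualFn N P ((((N : ℝ) + 1) / 2) • P⁻¹) →
      Y = (((N : ℝ) + 1) / 2) • P⁻¹) ∧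
    IsAdmissible N P (fstar N P) ∧
    entropyOf N (fstar N P) =
      sSup {h : ℝ | ∃ f, IsAdmissible N P f ∧ h = entropyOf N f} := by
  have hY := ystar_posDef hP
  have hadm := fstar_isAdmissible hP
  have hweak : ∀ f, IsAdmissible N P f → ∀ Y : Matrix (Fin N) (Fin N) ℝ, Y.PosDef →
      entropyOf N f ≤ dualFn N P Y := fun f hf Y hY => (weak_duality hf.isDensityWithMean hY).1
  have hent := entropyOf_fstar hP
  have hsup : IsGreatest {h : ℝ | ∃ f, IsAdmissible N P f ∧ h = entropyOf N f}
      (dualFn N P (ystar N P)) := by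
    refine ⟨⟨_, hadm, hent.symm⟩, ?_⟩
    rintro _ ⟨f, hf, rfl⟩
    exact hweak f hf _ hY
  have hmin : ∀ Y : Matrix (Fin N) (Fin N) ℝ, Y.PosDef →
      dualFn N P (ystar N P) ≤ dualFn N P Y := fun Y hY' => hent ▸ hweak _ hadm Y hY'
  have hinf : IsLeast {v : ℝ | ∃ Y : Matrix (Fin N) (Fin N) ℝ, Y.PosDef ∧ v = dualFn N P Y}
      (dualFn N P (ystar N P)) := by
    refine ⟨⟨_, hY, rfl⟩, ?_⟩
    rintro _ ⟨Y, hY', rfl⟩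
    exact hmin Y hY'
  exact ⟨hsup.csSup_eq.trans hinf.csInf_eq.symm, hmin, fun Y hY' h => ystar_unique hP hY' h,
    hadm, hent.trans hsup.csSup_eq.symm⟩
end
end

section
/- Let q : ℝ^m → ℝ be a positive definite quadratic form with q(t) ≥ λ‖t‖₂² for all t ∈ ℝ^m, where λ > 0. Then for every real number ω ≥ √(3m/λ), ∫_{t : ‖t‖₂ ≥ ω} e^{−q(t)} dt ≤ e^{−λω²/2} · ∫_{ℝ^m} e^{−q(t)} dt. -/
/-!
The exponential Chernoff trick. On `‖t‖₂ ≥ ω` one has `q(t) ≥ λω²`, so splitting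
`q = (3/4) q + (1/4) q` and using `q(t) / 4 = q(t / 2)` gives
`e^{-q(t)} ≤ e^{-3λω²/4} e^{-q(t/2)}` there. Integrating over all of `ℝ^m` and rescaling
costs a factor `2^m`, which is absorbed because `2 ≤ e^{3/4}` and `3m ≤ λω²` give
`2^m ≤ e^{3m/4} ≤ e^{λω²/4}`.
-/

open MeasureTheory Matrix

noncomputable section

lemma two_le_exp_three_quarters : (2 : ℝ) ≤ Real.exp (3 / 4) := by
  have h := Real.quadratic_le_exp_of_nonneg (show (0 : ℝ) ≤ 3 / 4 by norm_num)
  norm_num at h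
  linarith

lemma quadForm_half_smul {m : ℕ} (Q : Matrix (Fin m) (Fin m) ℝ) (t : Fin m → ℝ) :
    ((1 / 2 : ℝ) • t) ⬝ᵥ (Q *ᵥ ((1 / 2 : ℝ) • t)) = (t ⬝ᵥ (Q *ᵥ t)) / 4 := by
  rw [mulVec_smul, smul_dotProduct, dotProduct_smul, smul_eq_mul, smul_eq_mul]
  ring

/-- `e^{-q}` is dominated by the product `∏ i, e^{-λ tᵢ²}` of one-dimensional Gaussians. -/
lemma integrable_exp_neg_quadForm {m : ℕ} (Q : Matrix (Fin m) (Fin m) ℝ)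
    {lam : ℝ} (hlam : 0 < lam)
    (hq : ∀ t : Fin m → ℝ, lam * (∑ i, t i ^ 2) ≤ t ⬝ᵥ (Q *ᵥ t)) :
    Integrable (fun t : Fin m → ℝ => Real.exp (-(t ⬝ᵥ (Q *ᵥ t)))) := by
  have hprod : Integrable (fun t : Fin m → ℝ => ∏ i, Real.exp (-lam * t i ^ 2)) :=
    Integrable.fintype_prod (f := fun (_ : Fin m) (x : ℝ) => Real.exp (-lam * x ^ 2))
      (fun _ => integrable_exp_neg_mul_sq hlam)
  refine hprod.mono' ?_ (Filter.Eventually.of_forall fun t => ?_)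
  · refine Continuous.aestronglyMeasurable ?_
    simp only [dotProduct, mulVec]
    fun_prop
  · rw [Real.norm_eq_abs, abs_of_pos (Real.exp_pos _), ← Real.exp_sum, ← Finset.mul_sum]
    exact Real.exp_le_exp.2 (by linarith [hq t])

/-- Corollary `cor:q_bound_int_ball_but_better`.  Let `q(t) = tᵀQt` be a
positive definite quadratic form on `ℝ^m` with `q(t) ≥ λ‖t‖₂²` for all `t`,
where `λ > 0`.  Then for every `ω ≥ √(3m/λ)`,
`∫_{‖t‖₂ ≥ ω} e^{−q(t)} dt ≤ e^{−λω²/2} ∫_{ℝ^m} e^{−q(t)} dt`. -/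
theorem gaussian_tail_ball_bound
    (m : ℕ) (Q : Matrix (Fin m) (Fin m) ℝ) (hQ : Q.PosDef)
    (lam : ℝ) (hlam : 0 < lam)
    (hq : ∀ t : Fin m → ℝ, lam * (∑ i, t i ^ 2) ≤ t ⬝ᵥ (Q *ᵥ t))
    (ω : ℝ) (hω : Real.sqrt (3 * (m : ℝ) / lam) ≤ ω) :
    (∫ t in {t : Fin m → ℝ | ω ≤ Real.sqrt (∑ i, t i ^ 2)},
        Real.exp (-(t ⬝ᵥ (Q *ᵥ t)))) ≤
      Real.exp (-(lam * ω ^ 2) / 2) *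
        ∫ t : Fin m → ℝ, Real.exp (-(t ⬝ᵥ (Q *ᵥ t))) := by
  have hω0 : 0 ≤ ω := (Real.sqrt_nonneg _).trans hω
  have hm : 3 * (m : ℝ) ≤ lam * ω ^ 2 := by
    have h := (Real.sqrt_le_left hω0).1 hω
    rw [div_le_iff₀ hlam] at h
    linarith
  set f : (Fin m → ℝ) → ℝ := fun t => Real.exp (-(t ⬝ᵥ (Q *ᵥ t))) with hf
  have hint : Integrable f := integrable_exp_neg_quadForm Q hlam hq
  have hint2 : Integrable (fun t => f ((1 / 2 : ℝ) • t)) :=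
    hint.comp_smul (by norm_num)
  have hscale : ∫ t, f ((1 / 2 : ℝ) • t) = 2 ^ m * ∫ t, f t := by
    rw [Measure.integral_comp_smul]
    simp
  have hI : 0 ≤ ∫ t, f t := integral_nonneg fun t => (Real.exp_pos _).le
  have hS : MeasurableSet {t : Fin m → ℝ | ω ≤ Real.sqrt (∑ i, t i ^ 2)} :=
    (isClosed_le continuous_const (by fun_prop)).measurableSet
  have hpow : (2 : ℝ) ^ m ≤ Real.exp (lam * ω ^ 2 / 4) := by
    calc (2 : ℝ) ^ m ≤ Real.exp (3 / 4) ^ m :=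
          pow_le_pow_left₀ (by norm_num) two_le_exp_three_quarters m
      _ = Real.exp (m * (3 / 4)) := (Real.exp_nat_mul _ _).symm
      _ ≤ _ := Real.exp_le_exp.2 (by linarith)
  set c : ℝ := Real.exp (-(3 / 4) * (lam * ω ^ 2)) with hc
  have hpt : ∀ t ∈ {t : Fin m → ℝ | ω ≤ Real.sqrt (∑ i, t i ^ 2)},
      f t ≤ c * f ((1 / 2 : ℝ) • t) := by
    intro t ht
    have h1 : ω ^ 2 ≤ ∑ i, t i ^ 2 :=
      (Real.le_sqrt hω0 (Finset.sum_nonneg fun i _ => sq_nonneg (t i))).1 ht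
    have h2 := mul_le_mul_of_nonneg_left h1 hlam.le
    have h3 := hq t
    simp only [hf, hc]
    rw [quadForm_half_smul, ← Real.exp_add]
    exact Real.exp_le_exp.2 (by linarith)
  calc ∫ t in {t : Fin m → ℝ | ω ≤ Real.sqrt (∑ i, t i ^ 2)}, f t
      ≤ ∫ t in {t : Fin m → ℝ | ω ≤ Real.sqrt (∑ i, t i ^ 2)}, c * f ((1 / 2 : ℝ) • t) :=
        setIntegral_mono_on hint.integrableOn (hint2.const_mul c).integrableOn hS hpt
    _ ≤ ∫ t, c * f ((1 / 2 : ℝ) • t) :=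
        setIntegral_le_integral (hint2.const_mul c)
          (Filter.Eventually.of_forall fun t =>
            mul_nonneg (Real.exp_pos _).le (Real.exp_pos _).le)
    _ = c * 2 ^ m * ∫ t, f t := by rw [integral_const_mul, hscale, mul_assoc]
    _ ≤ c * Real.exp (lam * ω ^ 2 / 4) * ∫ t, f t :=
        mul_le_mul_of_nonneg_right
          (mul_le_mul_of_nonneg_left hpow (Real.exp_pos _).le) hI
    _ = Real.exp (-(lam * ω ^ 2) / 2) * ∫ t, f t := by
        rw [hc, ← Real.exp_add]
        ring_nf
end
end
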